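/- (KNN-ADS, Case 2) For every i with 1 ≤ i ≤ m − 1, if c_i = c_{i+1} = c and c < K, then φ(q_i) − φ(q_{i+1}) = ((1[y(q_i) = y_test] − 1[y(q_{i+1}) = y_test]) / K) · (min(K − c, i) / i). -/

import Mathlib

open Finset

variable {β L : Type*}

/-- The elements of `A` listed in increasing order of distance `d` to the query. -/
noncomputable def sortByDist (d : β → ℝ) (A : Finset β) : List β :=
  A.toList.mergeSort (fun p q => decide (d p ≤ d q))

/-- `N_i(A)`: the point of `A` with the `i`-th smallest distance to the query (1-indexed). -/
noncomputable def nthNearest [Inhabited β] (d : β → ℝ) (A : Finset β) (i : ℕ) : β :=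
  (sortByDist d A).getD (i - 1) default

/-- The KNN utility of a finite set `A` of labeled points at a query with label `ytest`:
`v_knn(A) = (1/K) · Σ_{i=1}^{min(K,|A|)} 1[y(N_i(A)) = y_test]`. -/
noncomputable def vknn [Inhabited β] [DecidableEq L] (K : ℕ) (ytest : L) (y : β → L)
    (d : β → ℝ) (A : Finset β) : ℝ :=
  (1 / K) * ∑ i ∈ Finset.Icc 1 (min K A.card),
    if y (nthNearest d A i) = ytest then (1 : ℝ) else 0

/-- The ADS value of a point `q` in the current group `C`, given the prefix instances `P`,
for the KNN utility. -/
noncomputable def adsKnn [Inhabited β] [DecidableEq β] [DecidableEq L] (K : ℕ) (ytest : L)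
    (y : β → L) (d : β → ℝ) (P C : Finset β) (q : β) : ℝ :=
  (1 / C.card) *
    ∑ S ∈ (C.erase q).powerset,
      (((C.card - 1).choose S.card : ℝ))⁻¹ *
        (vknn K ytest y d (P ∪ S ∪ {q}) - vknn K ytest y d (P ∪ S))

/-!
Let `a = q_i` and `b = q_{i+1}`. Pairing the coalitions that contain exactly one of `a`, `b` writes
`φ(a) - φ(b)` as the Shapley average, over coalitions `T` of the other points of `C`, of the effect
of replacing `a` by `b` in `P ∪ T ∪ {a}`. No point of `P ∪ T` lies between `a` and `b`, so this
effect is `(1[y(a) = y_test] - 1[y(b) = y_test]) / K` if fewer than `K` points of `P ∪ T` are closer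
than `a`, and `0` otherwise. There are `c + |T ∩ A|` such points, where `A` consists of the `i - 1`
points of `C` closer than `a`. A Shapley average does not see players that do not affect the value,
so `|T ∩ A|` is uniformly distributed on `{0, …, i - 1}`, and `c + |T ∩ A| < K` has probability
`min (K - c) i / i`.
-/

section Rank

variable {α γ : Type*}

section LT

variable [LT α] [DecidableLT α]

/-- The number of points of `A` strictly closer to the query than `p`. For a point of `A` this is
its position, counted from `0`, in the ordering of `A` by distance; it also makes sense for points
outside `A`, and the `c_i` of the theorem are ranks of points of `C` with respect to `P`. -/
def distRank (d : β → α) (A : Finset β) (p : β) : ℕ :=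
  #{q ∈ A | d q < d p}

/-- The `K` nearest points of `A` (all of `A` if `#A ≤ K`), as an unordered set over which the KNN
utility is summed. With ties in `d` there may be more than `K` of them. -/
def kNearest (d : β → α) (K : ℕ) (A : Finset β) : Finset β :=
  {p ∈ A | distRank d A p < K}

theorem distRank_insert [DecidableEq β] (d : β → α) {A : Finset β} {a : β} (ha : a ∉ A) (p : β) :
    distRank d (insert a A) p = distRank d A p + if d a < d p then 1 else 0 := by
  rw [distRank, filter_insert]
  split_ifs
  · rw [card_insert_of_notMem (by simp [ha]), distRank]
  · rfl

theorem distRank_union [DecidableEq β] (d : β → α) {A B : Finset β} (hAB : Disjoint A B) (p : β) :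
    distRank d (A ∪ B) p = distRank d A p + distRank d B p := by
  rw [distRank, filter_union, card_union_of_disjoint (disjoint_filter_filter hAB), distRank,
    distRank]

end LT

section Preorder

variable [Preorder α] [DecidableLT α] {d : β → α} {A B : Finset β} {a p q : β}

theorem distRank_mono (A : Finset β) (h : d p ≤ d q) : distRank d A p ≤ distRank d A q :=
  card_le_card (monotone_filter_right A fun _ _ hr => lt_of_lt_of_le hr h)

theorem distRank_lt_distRank (hp : p ∈ A) (h : d p < d q) : distRank d A p < distRank d A q := by
  refine card_lt_card <| ssubset_iff_of_subset ?_ |>.mpr ⟨p, by simp [hp, h], by simp⟩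
  exact monotone_filter_right A fun _ _ hr => lt_trans hr h

theorem distRank_lt_card (hp : p ∈ A) : distRank d A p < #A :=
  card_lt_card (filter_ssubset.mpr ⟨p, hp, lt_irrefl _⟩)

theorem distRank_image_of_strictMono [DecidableEq β] {n : ℕ} {f : Fin n → β}
    (hf : StrictMono (d ∘ f)) (j : Fin n) : distRank d (univ.image f) (f j) = j := by
  have hlt (i : Fin n) : d (f i) < d (f j) ↔ i < j := hf.lt_iff_lt
  rw [distRank, filter_image, card_image_of_injective _ hf.injective.of_comp]
  simp only [hlt, filter_gt_eq_Iio, Fin.card_Iio]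

theorem sum_kNearest_insert [DecidableEq β] [AddCommMonoid γ] (K : ℕ) (g : β → γ) (ha : a ∉ B) :
    ∑ p ∈ kNearest d K (insert a B), g p = (if distRank d B a < K then g a else 0) +
      ∑ p ∈ B with distRank d B p + (if d a < d p then 1 else 0) < K, g p := by
  simp only [kNearest, sum_filter, sum_insert ha, distRank_insert d ha, lt_irrefl, if_false,
    add_zero]

end Preorder

section LinearOrder

variable [LinearOrder α] {d : β → α} {A B : Finset β} {a b q : β}

theorem distRank_injOn (hA : Set.InjOn d A) : Set.InjOn (distRank d A) A := by
  intro p hp q hq h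
  rcases lt_trichotomy (d p) (d q) with hlt | heq | hlt
  · exact absurd h (distRank_lt_distRank hp hlt).ne
  · exact hA hp hq heq
  · exact absurd h (distRank_lt_distRank hq hlt).ne'

theorem lt_iff_lt_of_distRank_eq (h : distRank d A a = distRank d A b) (hq : q ∈ A) :
    d q < d a ↔ d q < d b := by
  wlog hab : d a ≤ d b generalizing a b
  · exact (this h.symm (le_of_not_ge hab)).symm
  have hfilter : ({q ∈ A | d q < d a} : Finset β) = {q ∈ A | d q < d b} :=
    eq_of_subset_of_card_le (monotone_filter_right A fun _ _ hr => lt_of_lt_of_le hr hab) h.ge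
  simpa [hq] using Finset.ext_iff.mp hfilter q

theorem sum_kNearest_insert_sub [DecidableEq β] [AddCommGroup γ] (K : ℕ) (g : β → γ)
    (ha : d a ∉ d '' B) (hb : d b ∉ d '' B) (hab : ∀ q ∈ B, d q < d a ↔ d q < d b) :
    ∑ p ∈ kNearest d K (insert a B), g p - ∑ p ∈ kNearest d K (insert b B), g p =
      if distRank d B a < K then g a - g b else 0 := by
  have hrank : distRank d B a = distRank d B b := congrArg card (filter_congr hab)
  have hab' (q : β) (hq : q ∈ B) : d a < d q ↔ d b < d q := by
    have hqa : d q ≠ d a := fun h => ha ⟨q, hq, h⟩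
    have hqb : d q ≠ d b := fun h => hb ⟨q, hq, h⟩
    rw [← not_iff_not, not_lt, not_lt, hqa.le_iff_lt, hqb.le_iff_lt, hab q hq]
  have hsum : ∑ p ∈ B with distRank d B p + (if d a < d p then 1 else 0) < K, g p =
      ∑ p ∈ B with distRank d B p + (if d b < d p then 1 else 0) < K, g p :=
    sum_congr (filter_congr fun q hq => by simp only [hab' q hq]) fun _ _ => rfl
  rw [sum_kNearest_insert K g fun h => ha ⟨a, h, rfl⟩,
    sum_kNearest_insert K g fun h => hb ⟨b, h, rfl⟩, hrank, hsum, add_sub_add_right_eq_sub]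
  split_ifs
  · rfl
  · exact sub_zero 0

end LinearOrder

end Rank

section Nearest

variable {γ : Type*} {d : β → ℝ} {A B : Finset β} {i : ℕ}

theorem mem_sortByDist {p : β} : p ∈ sortByDist d A ↔ p ∈ A := by
  simp [sortByDist]

theorem length_sortByDist (d : β → ℝ) (A : Finset β) : (sortByDist d A).length = #A := by
  simp [sortByDist]

theorem pairwise_lt_sortByDist (hA : Set.InjOn d A) :
    (sortByDist d A).Pairwise (d · < d ·) := by
  have hle : (sortByDist d A).Pairwise (d · ≤ d ·) := by
    simpa only [decide_eq_true_eq, sortByDist] using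
      List.pairwise_mergeSort (le := fun p q => decide (d p ≤ d q))
        (fun p q r => by simpa only [decide_eq_true_eq] using le_trans)
        (fun p q => by simpa using le_total (d p) (d q)) A.toList
  have hne : (sortByDist d A).Pairwise (· ≠ ·) :=
    (List.mergeSort_perm _ _).nodup_iff.mpr A.nodup_toList
  refine (hle.and hne).imp_of_mem fun hp hq h => h.1.lt_of_ne fun heq => h.2 ?_
  exact hA (mem_sortByDist.mp hp) (mem_sortByDist.mp hq) heq

variable [Inhabited β]

theorem exists_get_eq_nthNearest (d : β → ℝ) (hi : i ∈ Icc 1 #A) :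
    ∃ j : Fin (sortByDist d A).length, j + 1 = i ∧ (sortByDist d A).get j = nthNearest d A i := by
  obtain ⟨h1, hcard⟩ := mem_Icc.mp hi
  have hlt : i - 1 < (sortByDist d A).length := by rw [length_sortByDist]; omega
  exact ⟨⟨i - 1, hlt⟩, Nat.sub_add_cancel h1, by simp [nthNearest, hlt]⟩

theorem nthNearest_mem (d : β → ℝ) (hi : i ∈ Icc 1 #A) : nthNearest d A i ∈ A := by
  obtain ⟨j, -, hj⟩ := exists_get_eq_nthNearest d hi
  exact hj ▸ mem_sortByDist.mp (List.get_mem _ j)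

theorem distRank_nthNearest_add_one (hA : Set.InjOn d A) (hi : i ∈ Icc 1 #A) :
    distRank d A (nthNearest d A i) + 1 = i := by
  classical
  obtain ⟨j, rfl, hj⟩ := exists_get_eq_nthNearest d hi
  have himage : univ.image (sortByDist d A).get = A := by
    ext p
    simp only [mem_image, mem_univ, true_and, ← List.mem_iff_get, mem_sortByDist]
  have hmono : StrictMono (d ∘ (sortByDist d A).get) := fun _ _ =>
    List.pairwise_iff_get.mp (pairwise_lt_sortByDist hA) _ _
  have hrank := distRank_image_of_strictMono hmono j
  rw [himage] at hrank
  rw [← hj, hrank]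

theorem nthNearest_distRank_add_one (hA : Set.InjOn d A) {p : β} (hp : p ∈ A) :
    nthNearest d A (distRank d A p + 1) = p := by
  have hrank : distRank d A p + 1 ∈ Icc 1 #A := mem_Icc.mpr ⟨by simp, distRank_lt_card hp⟩
  exact distRank_injOn hA (nthNearest_mem d hrank) hp
    (Nat.succ_injective (distRank_nthNearest_add_one hA hrank))

theorem sum_nthNearest_eq_sum_kNearest [AddCommMonoid γ] (K : ℕ) (g : β → γ)
    (hA : Set.InjOn d A) :
    ∑ i ∈ Icc 1 (min K #A), g (nthNearest d A i) = ∑ p ∈ kNearest d K A, g p := by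
  have hmem {i : ℕ} (hi : i ∈ Icc 1 (min K #A)) : i ∈ Icc 1 #A ∧ i ≤ K := by
    grind
  refine sum_nbij' (nthNearest d A) (fun p => distRank d A p + 1) (fun i hi => ?_)
    (fun p hp => ?_) (fun i hi => distRank_nthNearest_add_one hA (hmem hi).1)
    (fun p hp => nthNearest_distRank_add_one hA (mem_filter.mp hp).1) fun _ _ => rfl
  · refine mem_filter.mpr ⟨nthNearest_mem d (hmem hi).1, Nat.lt_of_succ_le ?_⟩
    exact (distRank_nthNearest_add_one hA (hmem hi).1).trans_le (hmem hi).2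
  · obtain ⟨hpA, hpK⟩ := mem_filter.mp hp
    exact mem_Icc.mpr ⟨by simp, le_min hpK (distRank_lt_card hpA)⟩

theorem vknn_insert_sub_vknn_insert [DecidableEq β] [DecidableEq L] (K : ℕ) (ytest : L)
    (y : β → L) {a b : β} (hB : Set.InjOn d B) (ha : d a ∉ d '' B) (hb : d b ∉ d '' B)
    (hab : ∀ q ∈ B, d q < d a ↔ d q < d b) :
    vknn K ytest y d (insert a B) - vknn K ytest y d (insert b B) =
      if distRank d B a < K then
        ((if y a = ytest then (1 : ℝ) else 0) - (if y b = ytest then (1 : ℝ) else 0)) / K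
      else 0 := by
  have hvknn {x : β} (hx : d x ∉ d '' B) : vknn K ytest y d (insert x B) =
      1 / K * ∑ p ∈ kNearest d K (insert x B), if y p = ytest then (1 : ℝ) else 0 := by
    have hinj : Set.InjOn d ↑(insert x B) := by
      rw [coe_insert, Set.injOn_insert fun h => hx ⟨x, h, rfl⟩]
      exact ⟨hB, hx⟩
    rw [vknn, sum_nthNearest_eq_sum_kNearest K (fun p => if y p = ytest then (1 : ℝ) else 0) hinj]
  rw [hvknn ha, hvknn hb, ← mul_sub, sum_kNearest_insert_sub K _ ha hb hab, mul_ite, mul_zero,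
    one_div_mul_eq_div]

end Nearest

section Shapley

variable (𝕜 : Type*) [Field 𝕜]

/-- The weight of a coalition of `t` players among the `n` other players in the Shapley value of a
game with `n + 1` players; these numbers form Leibniz's harmonic triangle. -/
def shapleyWeight (n t : ℕ) : 𝕜 := ((n + 1) * n.choose t)⁻¹

variable {𝕜}

/-- The Shapley value of the player `q ∈ C` in the game on `C` with characteristic function `v`.
The ADS value given the prefix `P` is the case `v S = v_knn(P ∪ S)`. -/
def shapleyValue [DecidableEq β] (C : Finset β) (v : Finset β → 𝕜) (q : β) : 𝕜 :=
  ∑ S ∈ (C.erase q).powerset, shapleyWeight 𝕜 #(C.erase q) #S * (v (insert q S) - v S)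

theorem adsKnn_eq_shapleyValue [Inhabited β] [DecidableEq β] [DecidableEq L] (K : ℕ) (ytest : L)
    (y : β → L) (d : β → ℝ) (P : Finset β) {C : Finset β} {q : β} (hq : q ∈ C) :
    adsKnn K ytest y d P C q = shapleyValue C (fun S => vknn K ytest y d (P ∪ S)) q := by
  have hcard : (#(C.erase q) : ℝ) + 1 = #C := by
    exact_mod_cast card_erase_add_one hq
  simp only [adsKnn, shapleyValue, shapleyWeight, mul_sum, hcard, ← card_erase_of_mem hq,
    union_insert, union_singleton, mul_inv, one_div, mul_assoc]

variable [CharZero 𝕜]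

theorem shapleyWeight_succ {n t : ℕ} (h : t ≤ n) :
    shapleyWeight 𝕜 (n + 1) t = (n + 1 - t) / (n + 2) * shapleyWeight 𝕜 n t := by
  have hrec : (n.choose t : 𝕜) * (n + 1) = (n + 1).choose t * (n + 1 - t) := by
    have hcast := congrArg (Nat.cast (R := 𝕜)) (Nat.choose_mul_succ_eq n t)
    push_cast [Nat.cast_sub (h.trans n.le_succ)] at hcast
    exact hcast
  have hsub : (n + 1 - t : 𝕜) ≠ 0 := by
    rw [← Nat.cast_add_one, sub_ne_zero]
    exact_mod_cast (Nat.lt_succ_of_le h).ne'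
  rw [shapleyWeight, shapleyWeight, mul_comm (n + 1 : 𝕜), hrec, Nat.cast_add_one, add_assoc,
    one_add_one_eq_two]
  field_simp

theorem shapleyWeight_succ_succ (n t : ℕ) :
    shapleyWeight 𝕜 (n + 1) (t + 1) = (t + 1) / (n + 2) * shapleyWeight 𝕜 n t := by
  have hrec : (n + 1 : 𝕜) * n.choose t = (n + 1).choose (t + 1) * (t + 1) := by
    exact_mod_cast Nat.add_one_mul_choose_eq n t
  have ht : (t + 1 : 𝕜) ≠ 0 := t.cast_add_one_ne_zero
  rw [shapleyWeight, shapleyWeight, hrec, Nat.cast_add_one, add_assoc, one_add_one_eq_two]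
  field_simp

theorem shapleyWeight_succ_add_shapleyWeight_succ {n t : ℕ} (h : t ≤ n) :
    shapleyWeight 𝕜 (n + 1) t + shapleyWeight 𝕜 (n + 1) (t + 1) = shapleyWeight 𝕜 n t := by
  have hn : (n + 2 : 𝕜) ≠ 0 := by exact_mod_cast (n + 1).succ_ne_zero
  rw [shapleyWeight_succ h, shapleyWeight_succ_succ, ← add_mul, ← add_div,
    show (n + 1 - t + (t + 1) : 𝕜) = n + 2 by ring, div_self hn, one_mul]

theorem shapleyValue_sub_shapleyValue [DecidableEq β] {D : Finset β} {a b : β} (hab : a ≠ b)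
    (ha : a ∉ D) (hb : b ∉ D) (v : Finset β → 𝕜) :
    shapleyValue (insert a (insert b D)) v a - shapleyValue (insert a (insert b D)) v b =
      ∑ T ∈ D.powerset, shapleyWeight 𝕜 #D #T * (v (insert a T) - v (insert b T)) := by
  have hea : (insert a (insert b D)).erase a = insert b D := erase_insert (by simp [hab, ha])
  have heb : (insert a (insert b D)).erase b = insert a D := by
    rw [insert_comm, erase_insert (by simp [hab.symm, hb])]
  rw [shapleyValue, shapleyValue, hea, heb, card_insert_of_notMem ha, card_insert_of_notMem hb,
    sum_powerset_insert hb, sum_powerset_insert ha, ← sum_add_distrib, ← sum_add_distrib,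
    ← sum_sub_distrib]
  refine sum_congr rfl fun T hT => ?_
  have hTD := mem_powerset.mp hT
  rw [card_insert_of_notMem (notMem_mono hTD ha), card_insert_of_notMem (notMem_mono hTD hb),
    insert_comm b a, ← shapleyWeight_succ_add_shapleyWeight_succ (card_le_card hTD)]
  ring

theorem sum_shapleyWeight_union_mul_inter [DecidableEq β] {A E : Finset β} (hAE : Disjoint A E)
    (f : Finset β → 𝕜) :
    ∑ T ∈ (A ∪ E).powerset, shapleyWeight 𝕜 #(A ∪ E) #T * f (T ∩ A) =
      ∑ T ∈ A.powerset, shapleyWeight 𝕜 #A #T * f T := by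
  induction E using Finset.induction_on with
  | empty =>
    rw [union_empty]
    exact sum_congr rfl fun T hT => by rw [inter_eq_left.mpr (mem_powerset.mp hT)]
  | insert x E hx ih =>
    obtain ⟨hxA, hAE⟩ := disjoint_insert_right.mp hAE
    have hxU : x ∉ A ∪ E := by simp [hxA, hx]
    rw [union_insert, sum_powerset_insert hxU, ← sum_add_distrib, ← ih hAE,
      card_insert_of_notMem hxU]
    refine sum_congr rfl fun T hT => ?_
    have hTU := mem_powerset.mp hT
    rw [insert_inter_of_notMem hxA, card_insert_of_notMem (notMem_mono hTU hxU), ← add_mul,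
      shapleyWeight_succ_add_shapleyWeight_succ (card_le_card hTU)]

theorem sum_shapleyWeight_mul_card (A : Finset β) (f : ℕ → 𝕜) :
    ∑ T ∈ A.powerset, shapleyWeight 𝕜 #A #T * f #T =
      (∑ j ∈ range (#A + 1), f j) / (#A + 1 : ℕ) := by
  rw [sum_powerset_apply_card fun t => shapleyWeight 𝕜 #A t * f t, sum_div]
  refine sum_congr rfl fun j hj => ?_
  have hchoose : ((#A).choose j : 𝕜) ≠ 0 := by
    exact_mod_cast (Nat.choose_pos (mem_range_succ_iff.mp hj)).ne'
  rw [nsmul_eq_mul, shapleyWeight, Nat.cast_add_one]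
  field_simp

theorem sum_shapleyWeight_mul_card_inter [DecidableEq β] {A D : Finset β} (hAD : A ⊆ D)
    (f : ℕ → 𝕜) :
    ∑ T ∈ D.powerset, shapleyWeight 𝕜 #D #T * f #(T ∩ A) =
      (∑ j ∈ range (#A + 1), f j) / (#A + 1 : ℕ) := by
  rw [← sum_shapleyWeight_mul_card, ← sum_shapleyWeight_union_mul_inter (A := A) disjoint_sdiff,
    union_sdiff_of_subset hAD]

end Shapley

theorem adsKnn_sub_adsKnn_eq_sum_shapleyWeight [Inhabited β] [DecidableEq β] [DecidableEq L]
    (K : ℕ) (ytest : L) (y : β → L) (d : β → ℝ) (P : Finset β) {D : Finset β} {a b : β}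
    (hab : a ≠ b) (ha : a ∉ D) (hb : b ∉ D) :
    adsKnn K ytest y d P (insert a (insert b D)) a -
        adsKnn K ytest y d P (insert a (insert b D)) b =
      ∑ T ∈ D.powerset, shapleyWeight ℝ #D #T *
        (vknn K ytest y d (insert a (P ∪ T)) - vknn K ytest y d (insert b (P ∪ T))) := by
  rw [adsKnn_eq_shapleyValue K ytest y d P (by simp),
    adsKnn_eq_shapleyValue K ytest y d P (by simp), shapleyValue_sub_shapleyValue hab ha hb]
  simp only [union_insert]

theorem adsKnn_sub_adsKnn_of_distRank_eq [Inhabited β] [DecidableEq β] [DecidableEq L]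
    (K : ℕ) (ytest : L) (y : β → L) {d : β → ℝ} {P D : Finset β} {a b : β} (hPD : Disjoint P D)
    (hinj : Set.InjOn d ↑(P ∪ D)) (hab : a ≠ b) (ha : d a ∉ d '' ↑(P ∪ D))
    (hb : d b ∉ d '' ↑(P ∪ D)) (hP : distRank d P a = distRank d P b)
    (hD : distRank d D a = distRank d D b) :
    adsKnn K ytest y d P (insert a (insert b D)) a -
        adsKnn K ytest y d P (insert a (insert b D)) b =
      (((if y a = ytest then (1 : ℝ) else 0) - (if y b = ytest then (1 : ℝ) else 0)) / K) *
        (#{t ∈ range (distRank d D a + 1) | distRank d P a + t < K} /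
          ((distRank d D a + 1 : ℕ) : ℝ)) := by
  set x := ((if y a = ytest then (1 : ℝ) else 0) - (if y b = ytest then (1 : ℝ) else 0)) / K with hx
  set A : Finset β := {q ∈ D | d q < d a} with hA
  have hswap : ∀ T ∈ D.powerset,
      vknn K ytest y d (insert a (P ∪ T)) - vknn K ytest y d (insert b (P ∪ T)) =
        if distRank d P a + #(T ∩ A) < K then x else 0 := by
    intro T hT
    have hTD := mem_powerset.mp hT
    have hsub : (↑(P ∪ T) : Set β) ⊆ ↑(P ∪ D) := coe_subset.mpr (union_subset_union_right hTD)
    have hrank : distRank d T a = #(T ∩ A) := by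
      rw [hA, inter_filter, inter_eq_left.mpr hTD, distRank]
    have hsep : ∀ q ∈ P ∪ T, d q < d a ↔ d q < d b := fun q hq =>
      (mem_union.mp hq).elim (lt_iff_lt_of_distRank_eq hP) fun hqT =>
        lt_iff_lt_of_distRank_eq hD (hTD hqT)
    rw [vknn_insert_sub_vknn_insert K ytest y (hinj.mono hsub)
      (Set.notMem_subset (Set.image_mono hsub) ha) (Set.notMem_subset (Set.image_mono hsub) hb)
      hsep, distRank_union d (hPD.mono_right hTD), hrank, hx]
  rw [adsKnn_sub_adsKnn_eq_sum_shapleyWeight K ytest y d P hab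
    (fun h => ha ⟨a, by simp [h], rfl⟩) (fun h => hb ⟨b, by simp [h], rfl⟩)]
  calc
    _ = ∑ T ∈ D.powerset, shapleyWeight ℝ #D #T *
          if distRank d P a + #(T ∩ A) < K then x else 0 :=
      sum_congr rfl fun T hT => by rw [hswap T hT]
    _ = (∑ t ∈ range (#A + 1), if distRank d P a + t < K then x else 0) / (#A + 1 : ℕ) :=
      sum_shapleyWeight_mul_card_inter (filter_subset _ _)
        fun t => if distRank d P a + t < K then x else 0
    _ = x * (#{t ∈ range (#A + 1) | distRank d P a + t < K} / (#A + 1 : ℕ)) := by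
      rw [← sum_filter, sum_const, nsmul_eq_mul, mul_div_right_comm, mul_comm]

theorem card_filter_add_lt_range (K c n : ℕ) :
    #{t ∈ range n | c + t < K} = min (K - c) n := by
  rw [← card_range (min (K - c) n)]
  congr 1
  grind

theorem knn_ads_case2_general [Inhabited β] [DecidableEq β] [DecidableEq L]
    (K : ℕ) (_hK : 1 ≤ K) (ytest : L) (y : β → L) (d : β → ℝ)
    (P C : Finset β) (hPC : Disjoint P C) (hinj : Set.InjOn d ↑(P ∪ C))
    {a b : β} (ha : a ∈ C) (hb : b ∈ C) (hP : distRank d P a = distRank d P b)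
    (hC : distRank d C b = distRank d C a + 1) :
    adsKnn K ytest y d P C a - adsKnn K ytest y d P C b =
      (((if y a = ytest then (1 : ℝ) else 0) - (if y b = ytest then (1 : ℝ) else 0)) / K) *
        (#{t ∈ range (distRank d C a + 1) | distRank d P a + t < K} /
          ((distRank d C a + 1 : ℕ) : ℝ)) := by
  have hlt : d a < d b := lt_of_not_ge fun h => by
    have := distRank_mono C h
    omega
  have hab : a ≠ b := fun h => hlt.ne (congrArg d h)
  obtain ⟨D, haD, hbD, rfl⟩ : ∃ D, a ∉ D ∧ b ∉ D ∧ C = insert a (insert b D) :=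
    ⟨(C.erase a).erase b, by simp, by simp, by
      rw [insert_erase (mem_erase.mpr ⟨hab.symm, hb⟩), insert_erase ha]⟩
  have hrank (p : β) : distRank d (insert a (insert b D)) p =
      distRank d D p + (if d b < d p then 1 else 0) + if d a < d p then 1 else 0 := by
    rw [distRank_insert d (by simp [hab, haD]), distRank_insert d hbD]
  have hDa : distRank d (insert a (insert b D)) a = distRank d D a := by simp [hrank, hlt.not_gt]
  have hDb : distRank d (insert a (insert b D)) b = distRank d D b + 1 := by simp [hrank, hlt]
  have hDC : D ⊆ insert a (insert b D) := (subset_insert b D).trans (subset_insert a _)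
  have hsub : (↑(P ∪ D) : Set β) ⊆ ↑(P ∪ insert a (insert b D)) :=
    coe_subset.mpr (union_subset_union_right hDC)
  have hnotMem {x : β} (hx : x ∈ insert a (insert b D)) (hxD : x ∉ D) :
      d x ∉ d '' ↑(P ∪ D) := by
    rw [hinj.mem_image_iff hsub (mem_union_right P hx), mem_coe, mem_union, not_or]
    exact ⟨disjoint_right.mp hPC hx, hxD⟩
  rw [hDa]
  exact adsKnn_sub_adsKnn_of_distRank_eq K ytest y (hPC.mono_right hDC) (hinj.mono hsub) hab
    (hnotMem ha haD) (hnotMem hb hbD) hP (by omega)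

/-- KNN-ADS, Case 2: if `c_i = c_{i+1} = c < K`, then
`φ(q_i) − φ(q_{i+1}) = ((1[y(q_i)=y_test] − 1[y(q_{i+1})=y_test])/K) · (min(K−c, i)/i)`. -/
theorem knn_ads_case2 [Inhabited β] [DecidableEq β] [DecidableEq L]
    (K : ℕ) (hK : 1 ≤ K) (ytest : L) (y : β → L) (d : β → ℝ)
    (P C : Finset β) (hPC : Disjoint P C)
    (hinj : Set.InjOn d ↑(P ∪ C))
    (m : ℕ) (hm : m = C.card)
    (i : ℕ) (hi1 : 1 ≤ i) (hi : i ≤ m - 1)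
    (c : ℕ)
    (hci : (P.filter (fun p => d p < d (nthNearest d C i))).card = c)
    (hci1 : (P.filter (fun p => d p < d (nthNearest d C (i + 1)))).card = c)
    (hcK : c < K) :
    adsKnn K ytest y d P C (nthNearest d C i) -
        adsKnn K ytest y d P C (nthNearest d C (i + 1)) =
      (((if y (nthNearest d C i) = ytest then (1 : ℝ) else 0) -
          (if y (nthNearest d C (i + 1)) = ytest then (1 : ℝ) else 0)) / K) *
        ((min (K - c) i : ℕ) / (i : ℝ)) := by
  have hi₀ : i ∈ Icc 1 #C := mem_Icc.mpr ⟨hi1, by omega⟩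
  have hi₁ : i + 1 ∈ Icc 1 #C := mem_Icc.mpr ⟨by omega, by omega⟩
  have hC : Set.InjOn d C := hinj.mono (coe_subset.mpr subset_union_right)
  have hrank₀ := distRank_nthNearest_add_one hC hi₀
  have hrank₁ := distRank_nthNearest_add_one hC hi₁
  have hrankP : distRank d P (nthNearest d C i) = c := hci
  rw [knn_ads_case2_general K hK ytest y d P C hPC hinj (nthNearest_mem d hi₀)
    (nthNearest_mem d hi₁) (hci.trans hci1.symm) (by omega), card_filter_add_lt_range, hrank₀,
    hrankP]
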